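/- For all real numbers x ≥ 1 and y ≥ 2, one has f(x,y) ≥ A(x/2, y). -/

import Mathlib

/-- `Pmax n` is the largest prime factor of `n`, with the convention `Pmax 1 = 1`. -/
def Pmax (n : ℕ) : ℕ := if n ≤ 1 then 1 else n.primeFactors.sup id

/-- The Schinzel–Szekeres function: if `n = p₁ p₂ ⋯ p_Ω` with `p₁ ≥ p₂ ≥ ⋯ ≥ p_Ω` prime,
`SS n = max_{1 ≤ k ≤ Ω} p₁ ⋯ p_{k-1} p_k²`, and `SS 1 = 1`.
(`Nat.primeFactorsList n` is the *increasing* list of prime factors with multiplicity;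
the value produced for the index `j` is the one for `k = Ω - j`.) -/
def SS (n : ℕ) : ℕ :=
  ((List.range n.primeFactorsList.length).map
    (fun j => (n.primeFactorsList.drop j).headI * (n.primeFactorsList.drop j).prod)).foldr max 1

/-- A chain in the divisor graph: a finite sequence of pairwise distinct positive
integers in which any two consecutive terms are adjacent in the divisor graph
(the smaller divides the larger). -/
def IsDivChain (l : List ℕ) : Prop :=
  l.Nodup ∧ (∀ n ∈ l, 0 < n) ∧ l.Chain' (fun a b => a ∣ b ∨ b ∣ a)

/-- `fxy x y` is the maximum length of a chain all of whose terms `n`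
satisfy `n ≤ x` and `P(n) ≤ y`. -/
noncomputable def fxy (x y : ℝ) : ℕ :=
  sSup {L : ℕ | ∃ l : List ℕ, IsDivChain l ∧
    (∀ n ∈ l, (n : ℝ) ≤ x ∧ (Pmax n : ℝ) ≤ y) ∧ l.length = L}

/-- `Axy x y = #{n ≥ 1 : P(n) ≤ y and S(n) ≤ x}`. -/
noncomputable def Axy (x y : ℝ) : ℕ :=
  {n : ℕ | 1 ≤ n ∧ (Pmax n : ℝ) ≤ y ∧ (SS n : ℝ) ≤ x}.ncard

/-!
Let `p₀ < p₁ < ⋯` be the primes. A number whose Schinzel–Szekeres value is at most `z` and whose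
prime factors are among `p₀, …, pᵢ` is either free of `pᵢ`, or `pᵢ` times such a number for
`z / pᵢ`. Chains of terms at most `2 * z` catching all these numbers are therefore glued, for
decreasing `i`, out of multiples by `pᵢ` of chains for `z / pᵢ`, provided the end points of the
pieces match. Three families of chains with prescribed end points are closed under this gluing:
from `pᵢ` to `2` avoiding `1`, from `1` to `2`, and from `1` to `pᵢ` using the primes up to `pᵢ₊₁`.
For `i = 0` the end point `pᵢ` would clash with `2` and is replaced by `4`; the bound `2 * z`
leaves room for `4` and for the detour through `2 * pᵢ` when `pᵢ ≤ z < pᵢ ^ 2`.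
-/

local notation "𝔭" => Nat.nth Nat.Prime

section HasPath

variable {α β : Type*} {r : α → α → Prop} {V V₁ V₂ C C₁ C₂ : Set α} {a b c d : α}

/-- There is a path from `a` to `b` for the relation `r`, without repeated vertices, staying in `V`
and visiting every element of `C`. -/
def HasPath (r : α → α → Prop) (V C : Set α) (a b : α) : Prop :=
  ∃ l : List α, l.Nodup ∧ l.IsChain r ∧ l.head? = some a ∧ l.getLast? = some b ∧
    (∀ n ∈ l, n ∈ V) ∧ ∀ n ∈ C, n ∈ l

namespace HasPath

theorem mono (h : HasPath r V₁ C₁ a b) (hV : V₁ ⊆ V₂) (hC : C₂ ⊆ C₁) : HasPath r V₂ C₂ a b := by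
  obtain ⟨l, hnodup, hchain, hhead, hlast, hmem, hcover⟩ := h
  exact ⟨l, hnodup, hchain, hhead, hlast, fun n hn => hV (hmem n hn), fun n hn => hcover n (hC hn)⟩

theorem reverse [Std.Symm r] (h : HasPath r V C a b) : HasPath r V C b a := by
  obtain ⟨l, hnodup, hchain, hhead, hlast, hmem, hcover⟩ := h
  exact ⟨l.reverse, List.nodup_reverse.2 hnodup,
    List.isChain_reverse.2 (hchain.imp fun _ _ => Std.Symm.symm _ _),
    by rwa [List.head?_reverse], by rwa [List.getLast?_reverse],
    by simpa only [List.mem_reverse], by simpa only [List.mem_reverse]⟩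

theorem append (h₁ : HasPath r V₁ C₁ a b) (h₂ : HasPath r V₂ C₂ c d) (hbc : r b c)
    (hV : Disjoint V₁ V₂) : HasPath r (V₁ ∪ V₂) (C₁ ∪ C₂) a d := by
  obtain ⟨l₁, hnodup₁, hchain₁, hhead₁, hlast₁, hmem₁, hcover₁⟩ := h₁
  obtain ⟨l₂, hnodup₂, hchain₂, hhead₂, hlast₂, hmem₂, hcover₂⟩ := h₂
  refine ⟨l₁ ++ l₂, hnodup₁.append hnodup₂ fun n hn₁ hn₂ =>
    hV.notMem_of_mem_left (hmem₁ n hn₁) (hmem₂ n hn₂), hchain₁.append hchain₂ ?_,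
    by simp [hhead₁], by simp [hlast₂], ?_, ?_⟩
  · simpa [hlast₁, hhead₂] using hbc
  · exact fun n hn => (List.mem_append.1 hn).imp (hmem₁ n) (hmem₂ n)
  · exact fun n hn => List.mem_append.2 (hn.imp (hcover₁ n) (hcover₂ n))

theorem cons (h : HasPath r (V \ {c}) (C \ {c}) a b) (hc : c ∈ V) (hca : r c a) :
    HasPath r V C c b := by
  obtain ⟨l, hnodup, hchain, hhead, hlast, hmem, hcover⟩ := h
  refine ⟨c :: l, List.nodup_cons.2 ⟨fun hcl => (hmem c hcl).2 rfl, hnodup⟩,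
    List.isChain_cons.2 ⟨by simpa [hhead] using hca, hchain⟩, rfl,
    by simp [List.getLast?_cons, hlast], ?_, ?_⟩
  · exact List.forall_mem_cons.2 ⟨hc, fun n hn => (hmem n hn).1⟩
  · intro n hn
    by_cases hnc : n = c
    · exact List.mem_cons.2 (Or.inl hnc)
    · exact List.mem_cons_of_mem c (hcover n ⟨hn, hnc⟩)

theorem concat [Std.Symm r] (h : HasPath r (V \ {c}) (C \ {c}) a b) (hc : c ∈ V) (hbc : r b c) :
    HasPath r V C a c :=
  (h.reverse.cons hc (Std.Symm.symm _ _ hbc)).reverse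

theorem image {s : β → β → Prop} {f : α → β} (h : HasPath r V C a b)
    (hf : Function.Injective f) (hrs : ∀ x y, r x y → s (f x) (f y)) :
    HasPath s (f '' V) (f '' C) (f a) (f b) := by
  obtain ⟨l, hnodup, hchain, hhead, hlast, hmem, hcover⟩ := h
  refine ⟨l.map f, hnodup.map hf, (List.isChain_map f).2 (hchain.imp hrs), by simp [hhead],
    by simp [hlast], ?_, ?_⟩
  · exact List.forall_mem_map.2 fun n hn => Set.mem_image_of_mem f (hmem n hn)
  · exact Set.forall_mem_image.2 fun n hn => List.mem_map_of_mem (hcover n hn)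

theorem of_pairwise (hr : V.Pairwise r) (hV : V.Finite) (ha : a ∈ V) (hb : b ∈ V)
    (hab : a ≠ b) : HasPath r V V a b := by
  classical
  let l := a :: (((hV.toFinset.erase a).erase b).toList ++ [b])
  have hnodup : l.Nodup := by simp +contextual [l, List.nodup_append, Finset.nodup_toList, hab]
  have hmem (n : α) : n ∈ l ↔ n ∈ V := by
    simp only [l, List.mem_cons, List.mem_append, Finset.mem_toList, Finset.mem_erase,
      Set.Finite.mem_toFinset, List.not_mem_nil]
    grind
  refine ⟨l, hnodup, List.Pairwise.isChain ?_, rfl, ?_, fun n => (hmem n).1, fun n => (hmem n).2⟩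
  · exact hnodup.imp_of_mem fun hx hy hxy => hr ((hmem _).1 hx) ((hmem _).1 hy) hxy
  · exact List.getLast?_concat (l := a :: _)

end HasPath

end HasPath

section SchinzelSzekeres

variable {n m q z i : ℕ}

theorem foldr_max_le_iff {α : Type*} [LinearOrder α] {l : List α} {a b : α} :
    l.foldr max a ≤ b ↔ a ≤ b ∧ ∀ c ∈ l, c ≤ b := by
  induction l with
  | nil => simp
  | cons c l ih => simp only [List.foldr_cons, max_le_iff, ih, List.forall_mem_cons]; tauto

theorem SS_le_iff : SS n ≤ z ↔ 1 ≤ z ∧ ∀ j < n.primeFactorsList.length,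
    (n.primeFactorsList.drop j).headI * (n.primeFactorsList.drop j).prod ≤ z := by
  simp only [SS, foldr_max_le_iff, List.forall_mem_map, List.mem_range]

theorem le_SS (hn : n ≠ 0) : n ≤ SS n := by
  obtain ⟨hone, hdrop⟩ := SS_le_iff.1 (le_refl (SS n))
  rcases hl : n.primeFactorsList with _ | ⟨q, l⟩
  · have hn1 : n = 1 := by simpa [hl] using (Nat.prod_primeFactorsList hn).symm
    rwa [← hn1] at hone
  · have hq : q.Prime := Nat.prime_of_mem_primeFactorsList (hl ▸ List.mem_cons_self)
    have hqn := hdrop 0 (by simp [hl])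
    rw [List.drop_zero, Nat.prod_primeFactorsList hn, hl, List.headI_cons] at hqn
    exact (Nat.le_mul_of_pos_left n hq.pos).trans hqn

theorem primeFactorsList_mul_eq_append_singleton (hq : q.Prime) (hm : m ∈ (q + 1).smoothNumbers) :
    (q * m).primeFactorsList = m.primeFactorsList ++ [q] := by
  have hperm : (q * m).primeFactorsList.Perm (m.primeFactorsList ++ [q]) := by
    refine (Nat.perm_primeFactorsList_mul hq.ne_zero hm.1).trans ?_
    rw [Nat.primeFactorsList_prime hq]
    exact List.perm_append_comm
  have hsorted : (m.primeFactorsList ++ [q]).Pairwise (· ≤ ·) := by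
    refine List.pairwise_append.2 ⟨(Nat.primeFactorsList_sorted m).pairwise, by simp, ?_⟩
    simpa using fun r hr => Nat.lt_succ_iff.1 (hm.2 r hr)
  exact hperm.eq_of_pairwise (fun _ _ _ _ => le_antisymm)
    (Nat.primeFactorsList_sorted _).pairwise hsorted

theorem SS_le_div_of_SS_mul_le (hq : q.Prime) (hm : m ∈ (q + 1).smoothNumbers)
    (h : SS (q * m) ≤ z) : q * q ≤ z ∧ SS m ≤ z / q := by
  obtain ⟨-, hdrop⟩ := SS_le_iff.1 h
  rw [primeFactorsList_mul_eq_append_singleton hq hm] at hdrop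
  have hqq : q * q ≤ z := by simpa using hdrop m.primeFactorsList.length (by simp)
  refine ⟨hqq, SS_le_iff.2 ⟨(Nat.le_div_iff_mul_le hq.pos).2 ?_, fun j hj => ?_⟩⟩
  · simpa using (Nat.le_mul_of_pos_left q hq.pos).trans hqq
  · have hj' := hdrop j (by simp only [List.length_append]; lia)
    rw [List.drop_append_of_le_length hj.le] at hj'
    rw [Nat.le_div_iff_mul_le hq.pos]
    obtain ⟨a, l, hal⟩ := List.exists_cons_of_ne_nil (List.drop_eq_nil_iff.not.2 hj.not_ge)
    simpa [hal, mul_assoc] using hj'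

theorem Pmax_le_iff {k : ℕ} (hn : n ≠ 0) (hk : 1 ≤ k) :
    Pmax n ≤ k ↔ n ∈ (k + 1).smoothNumbers := by
  rw [Pmax]
  split_ifs with hn1
  · obtain rfl : n = 1 := by lia
    simp [hk, Nat.mem_smoothNumbers]
  · simp [Nat.mem_smoothNumbers, hn]

end SchinzelSzekeres

section Primes

theorem strictMono_nth_prime : StrictMono 𝔭 := Nat.nth_strictMono Nat.infinite_setOfPred_prime

theorem mem_smoothNumbers_nth_prime_succ {n i : ℕ} :
    n ∈ (𝔭 (i + 1)).smoothNumbers ↔ n ∈ (𝔭 i + 1).smoothNumbers := by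
  simp only [Nat.mem_smoothNumbers']
  refine forall₃_congr fun r hr _ => ⟨fun h => ?_, fun h => ?_⟩
  · exact Nat.lt_succ_of_le (Nat.le_nth_of_lt_nth_succ h hr)
  · exact (Nat.le_of_lt_succ h).trans_lt (strictMono_nth_prime i.lt_succ_self)

theorem smoothNumbers_nth_prime_primeCounting' (k : ℕ) :
    (𝔭 k.primeCounting').smoothNumbers = k.smoothNumbers := by
  ext n
  simp only [Nat.mem_smoothNumbers']
  refine forall₃_congr fun r hr _ => ?_
  have hnth : 𝔭 r.primeCounting' = r := Nat.nth_count hr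
  rw [← hnth, strictMono_nth_prime.lt_iff_lt, Nat.primeCounting',
    Nat.lt_nth_iff_count_lt Nat.infinite_setOfPred_prime]

end Primes

section Levels

variable {n m z i : ℕ}

/-- Adjacency in the divisor graph. Loops are allowed, which is harmless since the paths considered
here have no repeated vertices. -/
abbrev DivAdj : ℕ → ℕ → Prop := Relation.SymmGen (· ∣ ·)

/-- The numbers all of whose prime factors are among the first `i` primes and whose
Schinzel–Szekeres value is at most `z`: those that a path has to visit. -/
def szekeresSet (z i : ℕ) : Set ℕ := {n | n ∈ (𝔭 i).smoothNumbers ∧ SS n ≤ z}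

/-- The numbers all of whose prime factors are among the first `i` primes and which are at most
`2 * z`: those that a path may visit. -/
def ambientSet (z i : ℕ) : Set ℕ := {n | n ∈ (𝔭 i).smoothNumbers ∧ n ≤ 2 * z}

/-- A path from `a` to `b` in the divisor graph inside `ambientSet z i` that visits all of
`szekeresSet z i`. -/
abbrev FullPath (z i a b : ℕ) : Prop :=
  HasPath DivAdj (ambientSet z i) (szekeresSet z i) a b

/-- A path as in `FullPath`, except that it avoids the vertex `1`. -/
abbrev PuncturedPath (z i a b : ℕ) : Prop :=
  HasPath DivAdj (ambientSet z i \ {1}) (szekeresSet z i \ {1}) a b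

theorem szekeresSet_subset_ambientSet : szekeresSet z i ⊆ ambientSet z i :=
  fun _ hn => ⟨hn.1, (le_SS hn.1.1).trans (hn.2.trans (Nat.le_mul_of_pos_left z two_pos))⟩

theorem ambientSet_mono (z : ℕ) : Monotone (ambientSet z) :=
  fun _ _ hij _ hn => ⟨⟨hn.1.1, fun r hr =>
    (hn.1.2 r hr).trans_le (strictMono_nth_prime.monotone hij)⟩, hn.2⟩

theorem one_mem_ambientSet (hz : 1 ≤ z) : 1 ∈ ambientSet z i :=
  ⟨Nat.mem_smoothNumbers_of_lt one_pos (Nat.prime_nth_prime i).one_lt, by lia⟩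

theorem not_dvd_of_mem_ambientSet (hn : n ∈ ambientSet z i) : ¬ 𝔭 i ∣ n := fun hdvd =>
  (Nat.mem_smoothNumbers'.1 hn.1 (𝔭 i) (Nat.prime_nth_prime i) hdvd).false

theorem nth_prime_mul_mem_ambientSet (hm : m ∈ ambientSet (z / 𝔭 i) (i + 1)) :
    𝔭 i * m ∈ ambientSet z (i + 1) := by
  refine ⟨Nat.mul_mem_smoothNumbers ?_ hm.1, ?_⟩
  · exact Nat.mem_smoothNumbers_of_lt (Nat.prime_nth_prime i).pos
      (strictMono_nth_prime i.lt_succ_self)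
  · calc 𝔭 i * m ≤ 𝔭 i * (2 * (z / 𝔭 i)) := Nat.mul_le_mul_left _ hm.2
      _ = 2 * (𝔭 i * (z / 𝔭 i)) := by ring
      _ ≤ 2 * z := Nat.mul_le_mul_left 2 (Nat.mul_div_le z _)

theorem mem_szekeresSet_of_not_dvd (hn : n ∈ szekeresSet z (i + 1)) (hdvd : ¬ 𝔭 i ∣ n) :
    n ∈ szekeresSet z i := by
  refine ⟨Nat.mem_smoothNumbers'.2 fun r hr hrn => lt_of_le_of_ne ?_ ?_, hn.2⟩
  · exact Nat.le_nth_of_lt_nth_succ (Nat.mem_smoothNumbers'.1 hn.1 r hr hrn) hr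
  · rintro rfl
    exact hdvd hrn

theorem of_nth_prime_mul_mem_szekeresSet (h : 𝔭 i * m ∈ szekeresSet z (i + 1)) :
    𝔭 i * 𝔭 i ≤ z ∧ m ∈ szekeresSet (z / 𝔭 i) (i + 1) := by
  have hm := Nat.mem_smoothNumbers_of_dvd h.1 (dvd_mul_left m _)
  obtain ⟨hsq, hSS⟩ := SS_le_div_of_SS_mul_le (Nat.prime_nth_prime i)
    (mem_smoothNumbers_nth_prime_succ.1 hm) h.2
  exact ⟨hsq, hm, hSS⟩

theorem szekeresSet_succ_subset_union :
    szekeresSet z (i + 1) ⊆ (𝔭 i * ·) '' szekeresSet (z / 𝔭 i) (i + 1) ∪ szekeresSet z i := by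
  intro n hn
  by_cases hdvd : 𝔭 i ∣ n
  · obtain ⟨m, rfl⟩ := hdvd
    exact Or.inl ⟨m, (of_nth_prime_mul_mem_szekeresSet hn).2, rfl⟩
  · exact Or.inr (mem_szekeresSet_of_not_dvd hn hdvd)

theorem szekeresSet_succ_subset (hz : z < 𝔭 i * 𝔭 i) :
    szekeresSet z (i + 1) ⊆ szekeresSet z i := by
  refine fun n hn => mem_szekeresSet_of_not_dvd hn ?_
  rintro ⟨m, rfl⟩
  exact hz.not_ge (of_nth_prime_mul_mem_szekeresSet hn).1

theorem FullPath.succ {a b : ℕ} (h : FullPath z i a b) (hz : z < 𝔭 i * 𝔭 i) :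
    FullPath z (i + 1) a b :=
  h.mono (ambientSet_mono z i.le_succ) (szekeresSet_succ_subset hz)

theorem PuncturedPath.succ {a b : ℕ} (h : PuncturedPath z i a b) (hz : z < 𝔭 i * 𝔭 i) :
    PuncturedPath z (i + 1) a b :=
  h.mono (Set.sdiff_subset_sdiff_left (ambientSet_mono z i.le_succ))
    (Set.sdiff_subset_sdiff_left (szekeresSet_succ_subset hz))

theorem PuncturedPath.cons_one {a b : ℕ} (h : PuncturedPath z i a b) (hz : 1 ≤ z) :
    FullPath z i 1 b :=
  h.cons (one_mem_ambientSet hz) (Or.inl (one_dvd a))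

theorem FullPath.mul_append {a b c d : ℕ} (hmul : FullPath (z / 𝔭 i) (i + 1) a b)
    (hrest : PuncturedPath z i c d) (hbc : DivAdj (𝔭 i * b) c) :
    PuncturedPath z (i + 1) (𝔭 i * a) d := by
  have hp := Nat.prime_nth_prime i
  have hdisj : Disjoint ((𝔭 i * ·) '' ambientSet (z / 𝔭 i) (i + 1)) (ambientSet z i \ {1}) := by
    refine Set.disjoint_left.2 (Set.forall_mem_image.2 fun m _ hm => ?_)
    exact not_dvd_of_mem_ambientSet hm.1 (dvd_mul_right _ m)
  refine ((hmul.image (mul_right_injective₀ hp.ne_zero) fun x y hxy =>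
    hxy.imp (mul_dvd_mul_left _) (mul_dvd_mul_left _)).append hrest hbc hdisj).mono ?_ ?_
  · refine Set.union_subset (Set.image_subset_iff.2 fun m hm => ?_)
      (Set.sdiff_subset_sdiff_left (ambientSet_mono z i.le_succ))
    exact ⟨nth_prime_mul_mem_ambientSet hm, fun h => hp.ne_one (Nat.eq_one_of_mul_eq_one_right h)⟩
  · rintro n ⟨hn, hn1⟩
    exact (szekeresSet_succ_subset_union hn).imp_right fun hn => ⟨hn, hn1⟩

end Levels

section Paths

/-- The end point of the paths at the prime `𝔭 i`: this is `𝔭 i` itself, except that `4` replaces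
the prime `2`, which already serves as the other end point. -/
noncomputable def anchor (i : ℕ) : ℕ := if i = 0 then 4 else 𝔭 i

theorem dvd_or_dvd_of_mem_ambientSet_one {z m n : ℕ} (hm : m ∈ ambientSet z 1)
    (hn : n ∈ ambientSet z 1) : m ∣ n ∨ n ∣ m := by
  have eq_two_pow {k : ℕ} (hk : k ∈ ambientSet z 1) : ∃ e, k = 2 ^ e := by
    refine ⟨_, Nat.eq_prime_pow_of_unique_prime_dvd hk.1.1 fun {r} hr hrk => ?_⟩
    have hr3 : r < 3 := Nat.nth_prime_one_eq_three ▸ Nat.mem_smoothNumbers'.1 hk.1 r hr hrk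
    exact le_antisymm (Nat.le_of_lt_succ hr3) hr.two_le
  obtain ⟨e, rfl⟩ := eq_two_pow hm
  obtain ⟨f, rfl⟩ := eq_two_pow hn
  exact (le_total e f).imp (pow_dvd_pow 2) (pow_dvd_pow 2)

theorem puncturedPath_one_four_two {z : ℕ} (hz : 2 ≤ z) : PuncturedPath z 1 4 2 := by
  have two_pow_mem (e : ℕ) (he : 2 ^ e ≤ 2 * z) (he0 : e ≠ 0) :
      2 ^ e ∈ ambientSet z 1 \ {1} := by
    refine ⟨⟨Nat.mem_smoothNumbers'.2 fun r hr hdvd => ?_, he⟩, ?_⟩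
    · rw [(Nat.prime_dvd_prime_iff_eq hr Nat.prime_two).1 (hr.dvd_of_dvd_pow hdvd),
        Nat.nth_prime_one_eq_three]
      exact Nat.lt_succ_self 2
    · simp [he0]
  have hfinite : (ambientSet z 1 \ {1}).Finite :=
    (Set.finite_Iic (2 * z)).subset fun n hn => hn.1.2
  refine (HasPath.of_pairwise (fun m hm n hn _ => dvd_or_dvd_of_mem_ambientSet_one hm.1 hn.1)
    hfinite (two_pow_mem 2 ?_ two_ne_zero) (two_pow_mem 1 ?_ one_ne_zero) (by decide)).mono
    subset_rfl (Set.sdiff_subset_sdiff_left szekeresSet_subset_ambientSet)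
  all_goals lia

theorem FullPath.concat_two_mul_concat {z i : ℕ} (h : FullPath z i 1 2) (hi : i ≠ 0)
    (hpz : 𝔭 i ≤ z) (hz : z < 𝔭 i * 𝔭 i) : FullPath z (i + 1) 1 (𝔭 i) := by
  have hp := Nat.prime_nth_prime i
  have htwo : 2 < 𝔭 i := by
    simpa using strictMono_nth_prime (Nat.pos_of_ne_zero hi)
  have hdiv : 1 ≤ z / 𝔭 i := (Nat.one_le_div_iff hp.pos).2 hpz
  have hmem {c : ℕ} (hc : 0 < c) (hc2 : c ≤ 2) : 𝔭 i * c ∈ ambientSet z (i + 1) :=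
    nth_prime_mul_mem_ambientSet ⟨Nat.mem_smoothNumbers_of_lt hc
      (hc2.trans_lt (htwo.trans (strictMono_nth_prime i.lt_succ_self))), by lia⟩
  have hpunctured : HasPath DivAdj ((ambientSet z (i + 1) \ {𝔭 i}) \ {𝔭 i * 2})
      ((szekeresSet z (i + 1) \ {𝔭 i}) \ {𝔭 i * 2}) 1 2 := by
    refine h.mono (fun n hn => ⟨⟨ambientSet_mono z i.le_succ hn, ?_⟩, ?_⟩)
      ((Set.sdiff_subset.trans Set.sdiff_subset).trans (szekeresSet_succ_subset hz))
    · rintro rfl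
      exact not_dvd_of_mem_ambientSet hn dvd_rfl
    · rintro rfl
      exact not_dvd_of_mem_ambientSet hn (dvd_mul_right _ 2)
  refine (hpunctured.concat ⟨hmem two_pos le_rfl, ?_⟩ (Or.inl (dvd_mul_left 2 _))).concat ?_ ?_
  · simp [hp.ne_zero]
  · simpa using hmem one_pos one_le_two
  · exact Or.inr (dvd_mul_right _ 2)

mutual

theorem puncturedPath_anchor_two (z i : ℕ) (hz : 2 ≤ z) (hi : i = 0 ∨ 𝔭 i * 𝔭 i ≤ z) :
    PuncturedPath z (i + 1) (anchor i) 2 := by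
  match i, hi with
  | 0, _ => exact puncturedPath_one_four_two hz
  | i + 1, hi =>
    have hp := Nat.prime_nth_prime (i + 1)
    have hsq : 𝔭 (i + 1) * 𝔭 (i + 1) ≤ z := hi.resolve_left i.succ_ne_zero
    have hlt : 𝔭 i < 𝔭 (i + 1) := strictMono_nth_prime i.lt_succ_self
    have : z / 𝔭 (i + 1) < z := Nat.div_lt_self (by lia) hp.one_lt
    have hmul := fullPath_one_anchor (z / 𝔭 (i + 1)) i ((Nat.le_div_iff_mul_le hp.pos).2 hsq)
    have hrest := puncturedPath_anchor_two z i hz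
      (Or.inr ((Nat.mul_self_le_mul_self hlt.le).trans hsq))
    simpa [anchor] using hmul.mul_append hrest (Or.inr (dvd_mul_left _ _))
termination_by (z, 0, i)

theorem fullPath_one_two (z i : ℕ) (hz : 2 ≤ z) : FullPath z (i + 1) 1 2 := by
  by_cases hi : i = 0 ∨ 𝔭 i * 𝔭 i ≤ z
  · exact (puncturedPath_anchor_two z i hz hi).cons_one (by lia)
  · obtain ⟨hi0, hsq⟩ := not_or.1 hi
    obtain ⟨i, rfl⟩ := Nat.exists_eq_succ_of_ne_zero hi0
    exact (fullPath_one_two z i hz).succ (not_le.1 hsq)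
termination_by (z, 1, i)

theorem fullPath_one_anchor (z i : ℕ) (hz : 𝔭 (i + 1) ≤ z) : FullPath z (i + 2) 1 (anchor i) := by
  have hq := Nat.prime_nth_prime (i + 1)
  have hlt : 𝔭 i < 𝔭 (i + 1) := strictMono_nth_prime i.lt_succ_self
  have hz2 : 2 ≤ z := hq.two_le.trans hz
  have : z / 𝔭 (i + 1) < z := Nat.div_lt_self (by lia) hq.one_lt
  by_cases hi : i = 0 ∨ 𝔭 i * 𝔭 i ≤ z
  · have hrest : PuncturedPath z (i + 1) 2 (anchor i) :=
      (puncturedPath_anchor_two z i hz2 hi).reverse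
    by_cases hsq : 𝔭 (i + 1) * 𝔭 (i + 1) ≤ z
    · have hdiv : 𝔭 (i + 1) ≤ z / 𝔭 (i + 1) := (Nat.le_div_iff_mul_le hq.pos).2 hsq
      have hmul := fullPath_one_two (z / 𝔭 (i + 1)) (i + 1) (hq.two_le.trans hdiv)
      exact (hmul.mul_append hrest (Or.inr (dvd_mul_left 2 _))).cons_one (by lia)
    · exact (hrest.succ (not_le.1 hsq)).cons_one (by lia)
  · obtain ⟨hi0, hsq⟩ := not_or.1 hi
    obtain ⟨i, rfl⟩ := Nat.exists_eq_succ_of_ne_zero hi0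
    have hdetour := (fullPath_one_two z i hz2).concat_two_mul_concat i.succ_ne_zero
      (hlt.le.trans hz) (not_le.1 hsq)
    simpa [anchor] using hdetour.succ ((not_le.1 hsq).trans (Nat.mul_self_lt_mul_self hlt))
termination_by (z, 2, i)

end

theorem exists_isDivChain_cover (z : ℕ) {i : ℕ} (hi : i ≠ 0) : ∃ l, IsDivChain l ∧
    (∀ n ∈ l, n ∈ ambientSet z i) ∧ ∀ n ∈ szekeresSet z i, n ∈ l := by
  rcases Nat.lt_or_ge z 2 with hz | hz
  · have hle {n : ℕ} (hn : n ∈ szekeresSet z i) : n ≤ z := (le_SS hn.1.1).trans hn.2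
    have hne {n : ℕ} (hn : n ∈ szekeresSet z i) : n ≠ 0 := hn.1.1
    interval_cases z
    · exact ⟨[], ⟨List.nodup_nil, by simp, List.isChain_nil⟩, by simp, by grind⟩
    · exact ⟨[1], ⟨List.nodup_singleton 1, by simp, List.isChain_singleton 1⟩,
        by simp [one_mem_ambientSet], by grind⟩
  · obtain ⟨i, rfl⟩ := Nat.exists_eq_succ_of_ne_zero hi
    obtain ⟨l, hnodup, hchain, -, -, hmem, hcover⟩ := fullPath_one_two z i hz
    exact ⟨l, ⟨hnodup, fun n hn => Nat.pos_of_ne_zero (hmem n hn).1.1, hchain⟩, hmem, hcover⟩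

end Paths

section Counting

variable {x y : ℝ}

theorem cast_Pmax_le_iff {n : ℕ} (hn : n ≠ 0) (hy : 1 ≤ y) :
    (Pmax n : ℝ) ≤ y ↔ n ∈ (𝔭 ⌊y⌋₊.primeCounting).smoothNumbers := by
  rw [← Nat.le_floor_iff (zero_le_one.trans hy), Pmax_le_iff hn ((Nat.one_le_floor_iff y).2 hy),
    Nat.primeCounting, smoothNumbers_nth_prime_primeCounting']

theorem Axy_eq_ncard_szekeresSet (hx : 0 ≤ x) (hy : 1 ≤ y) :
    Axy x y = (szekeresSet ⌊x⌋₊ ⌊y⌋₊.primeCounting).ncard := by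
  refine congrArg Set.ncard (Set.ext fun n => ?_)
  refine ⟨fun ⟨hn, hP, hS⟩ => ?_, fun ⟨hP, hS⟩ => ?_⟩
  · exact ⟨(cast_Pmax_le_iff (Nat.one_le_iff_ne_zero.1 hn) hy).1 hP, Nat.le_floor hS⟩
  · exact ⟨Nat.one_le_iff_ne_zero.2 hP.1, (cast_Pmax_le_iff hP.1 hy).2 hP,
      (Nat.le_floor_iff hx).1 hS⟩

theorem cast_le_of_mem_ambientSet {n i : ℕ} (hx : 0 ≤ x) (hn : n ∈ ambientSet ⌊x / 2⌋₊ i) :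
    (n : ℝ) ≤ x :=
  calc (n : ℝ) ≤ 2 * ⌊x / 2⌋₊ := mod_cast hn.2
    _ ≤ 2 * (x / 2) := by gcongr; exact Nat.floor_le (by linarith)
    _ = x := by ring

theorem length_le_fxy {l : List ℕ} (hl : IsDivChain l)
    (hbound : ∀ n ∈ l, (n : ℝ) ≤ x ∧ (Pmax n : ℝ) ≤ y) : l.length ≤ fxy x y := by
  refine le_csSup ⟨⌊x⌋₊ + 1, ?_⟩ ⟨l, hl, hbound, rfl⟩
  rintro _ ⟨l', ⟨hnodup, -, -⟩, hbound', rfl⟩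
  have hrange : l' ⊆ List.range (⌊x⌋₊ + 1) := fun n hn =>
    List.mem_range.2 (Nat.lt_succ_of_le (Nat.le_floor (hbound' n hn).1))
  simpa using (hnodup.subperm hrange).length_le

end Counting

/-- For all real numbers `x ≥ 1` and `y ≥ 2`, one has `f(x,y) ≥ A(x/2, y)`. -/
theorem stmt_0 (x y : ℝ) (hx : 1 ≤ x) (hy : 2 ≤ y) :
    Axy (x / 2) y ≤ fxy x y := by
  have hx0 : 0 ≤ x := zero_le_one.trans hx
  have hy1 : 1 ≤ y := one_le_two.trans hy
  have hprimes : ⌊y⌋₊.primeCounting ≠ 0 :=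
    Nat.primeCounting_eq_zero_iff.not.2 (not_le.2 (Nat.le_floor hy))
  obtain ⟨l, hl, hmem, hcover⟩ := exists_isDivChain_cover ⌊x / 2⌋₊ hprimes
  calc Axy (x / 2) y = (szekeresSet ⌊x / 2⌋₊ ⌊y⌋₊.primeCounting).ncard :=
        Axy_eq_ncard_szekeresSet (by positivity) hy1
    _ ≤ (l.toFinset : Set ℕ).ncard :=
        Set.ncard_le_ncard fun n hn => List.mem_toFinset.2 (hcover n hn)
    _ = l.length := by rw [Set.ncard_coe_finset, List.toFinset_card_of_nodup hl.1]
    _ ≤ fxy x y := length_le_fxy hl fun n hn =>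
        ⟨cast_le_of_mem_ambientSet hx0 (hmem n hn),
          (cast_Pmax_le_iff (hmem n hn).1.1 hy1).2 (hmem n hn).1⟩
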